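/- arXiv:2003.06146 — 2 statements merged into one kernel-verified Lean document; each statement's English description precedes it below -/
import Mathlib

section
/- Let P be a finite set of points in projective r-space over an algebraically closed field and let d ≥ 2 be an integer. If for all k ≥ 1 no dk + 2 points of P lie in a projective k-plane, then P imposes independent conditions on forms of degree d; in fact for each point p of P there is a form of degree d vanishing on P \ {p} but not at p. -/
open MvPolynomial

/-! Projecting from `p` sends the points of `P \ {p}` to vectors `w q` of the quotient `V ⧸ ⟨p⟩`.
A set `A` of these points spans, together with `p`, a projective `k`-plane, where `k` is the
dimension of the span of `w '' A`; since this plane contains fewer than `d * k + 2` points of `P`,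
we get `#A ≤ d * k`. This is the Rado–Horn criterion, so `P \ {p}` splits into `d` classes, each
linearly independent modulo `p`. The span of such a class misses `p`, hence lies in a hyperplane
missing `p`, and the product of the `d` linear forms so obtained is the required form. -/

section Polymatroid

open Finset Function

variable {ι κ E : Type*} [DecidableEq E]

/-- `ρ` is the rank function of an integral polymatroid on `E`: a monotone submodular set function
vanishing at `∅`. This covers matroid ranks and, unlike them, is stable under sums. -/
structure IsPolymatroidRank (ρ : Finset E → ℕ) : Prop where
  map_empty : ρ ∅ = 0
  monotone : Monotone ρ
  map_union_add_map_inter_le : ∀ X Y, ρ (X ∪ Y) + ρ (X ∩ Y) ≤ ρ X + ρ Y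

namespace IsPolymatroidRank

lemma comap [DecidableEq ι] {ρ : Finset ι → ℕ} (hρ : IsPolymatroidRank ρ) {f : ι → E}
    (hf : Injective f) :
    IsPolymatroidRank fun X : Finset E ↦ ρ (X.preimage f hf.injOn) where
  map_empty := by simp only [preimage_empty, hρ.map_empty]
  monotone := hρ.monotone.comp (monotone_preimage hf)
  map_union_add_map_inter_le X Y := by
    simp only [preimage_union, preimage_inter hf.injOn hf.injOn]
    exact hρ.map_union_add_map_inter_le _ _

lemma sum {s : Finset κ} {ρ : κ → Finset E → ℕ} (hρ : ∀ j ∈ s, IsPolymatroidRank (ρ j)) :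
    IsPolymatroidRank fun X ↦ ∑ j ∈ s, ρ j X where
  map_empty := sum_eq_zero fun j hj ↦ (hρ j hj).map_empty
  monotone _ _ hXY := sum_le_sum fun j hj ↦ (hρ j hj).monotone hXY
  map_union_add_map_inter_le X Y := by
    simp only [← sum_add_distrib]
    exact sum_le_sum fun j hj ↦ (hρ j hj).map_union_add_map_inter_le X Y

end IsPolymatroidRank

/-- Rado's condition on a family `S` of finite sets, the analogue of Hall's marriage condition in
which the cardinality of a union of members is replaced by its rank `ρ`. -/
def RadoCondition (ρ : Finset E → ℕ) (S : ι → Finset E) : Prop :=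
  ∀ A : Finset ι, #A ≤ ρ (A.biUnion S)

namespace RadoCondition

variable {ρ : Finset E → ℕ} {S : ι → Finset E}

lemma nonempty (hS : RadoCondition ρ S) (hρ : IsPolymatroidRank ρ) (i : ι) : (S i).Nonempty := by
  by_contra hi
  have hcard : #{i} ≤ ρ (({i} : Finset ι).biUnion S) := hS {i}
  rw [singleton_biUnion, not_nonempty_iff_eq_empty.1 hi, hρ.map_empty, card_singleton] at hcard
  exact absurd hcard (by decide)

lemma update [DecidableEq ι] (hS : RadoCondition ρ S) {i : ι} {X : Finset E}
    (hX : ∀ A, i ∉ A → #A < ρ (X ∪ A.biUnion S)) : RadoCondition ρ (update S i X) := by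
  have biUnion_update (A : Finset ι) (hA : i ∉ A) :
      A.biUnion (Function.update S i X) = A.biUnion S :=
    biUnion_congr rfl fun j hj ↦ update_of_ne (ne_of_mem_of_not_mem hj hA) X S
  intro A
  by_cases hi : i ∈ A
  · rw [← insert_erase hi, biUnion_insert, update_self, biUnion_update _ (notMem_erase i A),
      card_insert_of_notMem (notMem_erase i A)]
    exact hX _ (notMem_erase i A)
  · rw [biUnion_update A hi]
    exact hS A

lemma update_or_update [DecidableEq ι] (hS : RadoCondition ρ S) (hρ : IsPolymatroidRank ρ)
    {i : ι} {X Y : Finset E} (hXY : S i ⊆ X ∪ Y) :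
    RadoCondition ρ (Function.update S i X) ∨ RadoCondition ρ (Function.update S i Y) := by
  by_contra! hfail
  obtain ⟨A, hiA, hA⟩ : ∃ A, i ∉ A ∧ ρ (X ∪ A.biUnion S) ≤ #A := by
    by_contra! hX
    exact hfail.1 (hS.update hX)
  obtain ⟨B, hiB, hB⟩ : ∃ B, i ∉ B ∧ ρ (Y ∪ B.biUnion S) ≤ #B := by
    by_contra! hY
    exact hfail.2 (hS.update hY)
  have hunion : #(A ∪ B) + 1 ≤ ρ ((X ∪ A.biUnion S) ∪ (Y ∪ B.biUnion S)) := by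
    rw [← card_insert_of_notMem (notMem_union.2 ⟨hiA, hiB⟩)]
    refine (hS _).trans (hρ.monotone ?_)
    rw [biUnion_insert, union_biUnion, union_union_union_comm]
    exact union_subset_union_left hXY
  have hinter : #(A ∩ B) ≤ ρ ((X ∪ A.biUnion S) ∩ (Y ∪ B.biUnion S)) := by
    refine (hS _).trans (hρ.monotone (subset_inter ?_ ?_))
    · exact (biUnion_subset_biUnion_of_subset_left S inter_subset_left).trans subset_union_right
    · exact (biUnion_subset_biUnion_of_subset_left S inter_subset_right).trans subset_union_right
  have hsubmod := hρ.map_union_add_map_inter_le (X ∪ A.biUnion S) (Y ∪ B.biUnion S)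
  have hcard := card_union_add_card_inter A B
  omega

lemma card_eq_one_of_minimal (hρ : IsPolymatroidRank ρ) (hS : Minimal (RadoCondition ρ) S)
    (i : ι) : #(S i) = 1 := by
  classical
  refine le_antisymm (not_lt.1 fun hlt ↦ ?_) (hS.prop.nonempty hρ i).card_pos
  obtain ⟨x, hx, y, hy, hxy⟩ := one_lt_card.1 hlt
  have not_update_erase {z : E} (hz : z ∈ S i) :
      ¬ RadoCondition ρ (Function.update S i ((S i).erase z)) :=
    hS.not_prop_of_lt (update_lt_self_iff.2 (erase_ssubset hz))
  have hcover : S i ⊆ (S i).erase x ∪ (S i).erase y := by grind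
  exact (hS.prop.update_or_update hρ hcover).elim (not_update_erase hx) (not_update_erase hy)

/-- Rado's theorem on independent transversals, in its polymatroid form. -/
theorem exists_transversal [Finite ι] (hS : RadoCondition ρ S) (hρ : IsPolymatroidRank ρ) :
    ∃ t : ι → E, (∀ i, t i ∈ S i) ∧ ∀ A : Finset ι, #A ≤ ρ (A.image t) := by
  classical
  obtain ⟨T, hTS, hT⟩ := exists_minimal_le_of_wellFoundedLT (RadoCondition ρ) S hS
  choose t ht using fun i ↦ card_eq_one.1 (card_eq_one_of_minimal hρ hT i)
  obtain rfl : T = fun i ↦ {t i} := funext ht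
  refine ⟨t, fun i ↦ singleton_subset_iff.1 (hTS i), fun A ↦ ?_⟩
  rw [← biUnion_singleton]
  exact hT.prop A

end RadoCondition

-- Rado's theorem for the sets `{i} ×ˢ univ` in `ι × κ`, whose transversals are the maps `ι → κ`.
theorem exists_partition_card_le [Finite ι] [DecidableEq ι] [Fintype κ] {ρ : κ → Finset ι → ℕ}
    (hρ : ∀ j, IsPolymatroidRank (ρ j)) (hcard : ∀ A : Finset ι, #A ≤ ∑ j, ρ j A) :
    ∃ c : ι → κ, ∀ (j : κ) (A : Finset ι), (∀ i ∈ A, c i = j) → #A ≤ ρ j A := by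
  classical
  have hinj (j : κ) : Injective fun i : ι ↦ (i, j) := Prod.mk_left_injective j
  have hrank : IsPolymatroidRank fun X : Finset (ι × κ) ↦
      ∑ j, ρ j (X.preimage (fun i ↦ (i, j)) (hinj j).injOn) :=
    .sum fun j _ ↦ (hρ j).comap (hinj j)
  have hRado : RadoCondition (fun X : Finset (ι × κ) ↦
      ∑ j, ρ j (X.preimage (fun i ↦ (i, j)) (hinj j).injOn)) fun i ↦ {i} ×ˢ univ := by
    intro A
    have preimage_eq (j : κ) : (A.biUnion fun i ↦ ({i} : Finset ι) ×ˢ (univ : Finset κ)).preimage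
        (fun i ↦ (i, j)) (hinj j).injOn = A := by
      ext i; simp
    simpa only [preimage_eq] using hcard A
  obtain ⟨t, htS, ht⟩ := hRado.exists_transversal hrank
  have fst_t (i : ι) : (t i).1 = i := mem_singleton.1 (mem_product.1 (htS i)).1
  refine ⟨fun i ↦ (t i).2, fun j A hA ↦ ?_⟩
  have image_t : A.image t = A.image fun i ↦ (i, j) :=
    image_congr fun i hi ↦ Prod.ext (fst_t i) (hA i hi)
  have preimage_self : (A.image fun i ↦ (i, j)).preimage (fun i ↦ (i, j)) (hinj j).injOn = A := by
    ext i; simp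
  have preimage_of_ne {j' : κ} (hj' : j' ≠ j) :
      (A.image fun i ↦ (i, j)).preimage (fun i ↦ (i, j')) (hinj j').injOn = ∅ := by
    ext i; simp [hj'.symm]
  calc #A ≤ ∑ j', ρ j' ((A.image t).preimage (fun i ↦ (i, j')) (hinj j').injOn) := ht A
    _ = ρ j ((A.image t).preimage (fun i ↦ (i, j)) (hinj j).injOn) := by
      refine sum_eq_single_of_mem j (mem_univ j) fun j' _ hj' ↦ ?_
      simp only [image_t, preimage_of_ne hj', (hρ j').map_empty]
    _ = ρ j A := by simp only [image_t, preimage_self]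

end Polymatroid

section LinearAlgebra

open Finset Submodule Module

variable {K V V' ι : Type*} [DivisionRing K] [AddCommGroup V] [Module K V]
  [AddCommGroup V'] [Module K V']

lemma isPolymatroidRank_finrank_image [DecidableEq ι] (w : ι → V) :
    IsPolymatroidRank fun A : Finset ι ↦ (w '' A).finrank K where
  map_empty := by simp [Set.finrank_empty]
  monotone A B hAB := by
    have : FiniteDimensional K (span K (w '' B)) := .span_of_finite K (B.finite_toSet.image w)
    exact finrank_mono (span_mono (Set.image_mono hAB))
  map_union_add_map_inter_le A B := by
    have span_finite (C : Finset ι) : FiniteDimensional K (span K (w '' C)) :=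
      .span_of_finite K (C.finite_toSet.image w)
    have hunion : span K (w '' ↑(A ∪ B)) = span K (w '' A) ⊔ span K (w '' B) := by
      rw [coe_union, Set.image_union, span_union]
    have hinter : span K (w '' ↑(A ∩ B)) ≤ span K (w '' A) ⊓ span K (w '' B) :=
      le_inf (span_mono (Set.image_mono (coe_subset.2 inter_subset_left)))
        (span_mono (Set.image_mono (coe_subset.2 inter_subset_right)))
    simp only [Set.finrank]
    rw [hunion, ← finrank_sup_add_finrank_inf_eq (span K (w '' A))]
    exact Nat.add_le_add_left (finrank_mono hinter) _

/-- The **Rado–Horn theorem**. -/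
theorem exists_partition_linearIndepOn [Finite ι] {d : ℕ} {w : ι → V}
    (hw : ∀ A : Finset ι, #A ≤ d * (w '' A).finrank K) :
    ∃ c : ι → Fin d, ∀ j, LinearIndepOn K w (c ⁻¹' {j}) := by
  classical
  cases nonempty_fintype ι
  obtain ⟨c, hc⟩ := exists_partition_card_le (κ := Fin d)
    (fun _ ↦ isPolymatroidRank_finrank_image (K := K) w) (by simpa using hw)
  refine ⟨c, fun j ↦ ?_⟩
  rw [LinearIndepOn, linearIndependent_iff_card_le_finrank_span]
  simpa [Set.image_eq_range] using hc j (c ⁻¹' {j}).toFinset (by simp)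

lemma notMem_span_image_of_linearIndepOn_comp {f : V →ₗ[K] V'} {v : ι → V} {s : Set ι} {p : V}
    (hv : LinearIndepOn K (f ∘ v) s) (hp : p ≠ 0) (hfp : f p = 0) : p ∉ span K (v '' s) := by
  rw [Set.image_eq_range]
  exact fun hmem ↦ hp (disjoint_def.1 (range_ker_disjoint hv) p hmem hfp)

lemma finrank_comap_of_surjective [FiniteDimensional K V] {f : V →ₗ[K] V'}
    (hf : Function.Surjective f) (U : Submodule K V') :
    finrank K (U.comap f) = finrank K U + finrank K (LinearMap.ker f) := by
  rw [← (f.domRestrict (U.comap f)).finrank_range_add_finrank_ker, LinearMap.range_domRestrict,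
    map_comap_eq_of_surjective hf, LinearMap.ker_domRestrict,
    (comapSubtypeEquivOfLe (LinearMap.ker_le_comap f)).finrank_eq]

end LinearAlgebra

section Forms

open Finset Submodule Module

lemma exists_isHomogeneous_eval_eq_prod {R σ κ : Type*} [CommSemiring R] [Finite σ] [Fintype κ]
    (φ : κ → Dual R (σ → R)) :
    ∃ f : MvPolynomial σ R, f.IsHomogeneous (Fintype.card κ) ∧ ∀ x, eval x f = ∏ j, φ j x := by
  classical
  cases nonempty_fintype σ
  set M : Matrix κ σ R := LinearMap.toMatrix' (LinearMap.pi φ)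
  refine ⟨∏ j, M.toMvPolynomial j, ?_, fun x ↦ ?_⟩
  · simpa using IsHomogeneous.prod univ M.toMvPolynomial (fun _ ↦ 1)
      fun j _ ↦ M.toMvPolynomial_isHomogeneous j
  · simp [M, Matrix.toMvPolynomial_eval_eq_apply]

variable {K σ : Type*} [Field K] [Finite σ]

theorem exists_isHomogeneous_eval_eq_zero_of_card_le {ι : Type*} [Finite ι] {d : ℕ}
    {v : ι → σ → K} {p : σ → K} (hp : p ≠ 0)
    (hcard : ∀ A : Finset ι, #A ≤ d * (((K ∙ p).mkQ ∘ v) '' A).finrank K) :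
    ∃ f : MvPolynomial σ K, f.IsHomogeneous d ∧ (∀ i, eval (v i) f = 0) ∧ eval p f ≠ 0 := by
  obtain ⟨c, hc⟩ := exists_partition_linearIndepOn hcard
  have notMem_span (j : Fin d) : p ∉ span K (v '' (c ⁻¹' {j})) :=
    notMem_span_image_of_linearIndepOn_comp (hc j) hp (by simp)
  choose φ hφp hφ using fun j ↦ exists_le_ker_of_notMem (notMem_span j)
  obtain ⟨f, hf, hfφ⟩ := exists_isHomogeneous_eval_eq_prod φ
  refine ⟨f, by simpa using hf, fun i ↦ ?_, ?_⟩
  · rw [hfφ]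
    exact prod_eq_zero (mem_univ (c i)) (hφ (c i) (subset_span ⟨i, rfl, rfl⟩))
  · rw [hfφ]
    exact prod_ne_zero_iff.2 fun j _ ↦ hφp j

end Forms

section Projective

open Finset Submodule Module

variable {K V : Type*} [DivisionRing K] [AddCommGroup V] [Module K V]

lemma rep_notMem_span_singleton_rep {p q : Projectivization K V} (hqp : q ≠ p) :
    q.rep ∉ K ∙ p.rep := by
  rw [mem_span_singleton, ← Projectivization.mk_eq_mk_iff' K _ _ q.rep_nonzero p.rep_nonzero]
  simpa only [Projectivization.mk_rep] using hqp

lemma card_le_mul_finrank_mkQ_image [FiniteDimensional K V] {d : ℕ}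
    {P : Finset (Projectivization K V)}
    (hP : ∀ k : ℕ, 1 ≤ k → ∀ W : Submodule K V, finrank K W = k + 1 →
      {q ∈ (P : Set (Projectivization K V)) | q.rep ∈ W}.ncard < d * k + 2)
    {p : Projectivization K V} (hp : p ∈ P) {A : Finset (Projectivization K V)} (hA : A ⊆ P)
    (hpA : p ∉ A) :
    #A ≤ d *
      (((K ∙ p.rep).mkQ ∘ Projectivization.rep) '' (A : Set (Projectivization K V))).finrank K := by
  classical
  obtain rfl | ⟨q, hq⟩ := A.eq_empty_or_nonempty
  · exact card_empty.trans_le (Nat.zero_le _)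
  set U := span K (((K ∙ p.rep).mkQ ∘ Projectivization.rep) '' (A : Set (Projectivization K V)))
  have mkQ_mem {a} (ha : a ∈ A) : (K ∙ p.rep).mkQ a.rep ∈ U := subset_span ⟨a, ha, rfl⟩
  have hU : 1 ≤ finrank K U := by
    refine one_le_finrank_iff.2 ((Submodule.ne_bot_iff U).2 ⟨_, mkQ_mem hq, ?_⟩)
    rw [mkQ_apply, ne_eq, Quotient.mk_eq_zero]
    exact rep_notMem_span_singleton_rep (ne_of_mem_of_not_mem hq hpA)
  have hW : finrank K (U.comap (K ∙ p.rep).mkQ) = finrank K U + 1 := by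
    rw [finrank_comap_of_surjective (mkQ_surjective _), ker_mkQ,
      finrank_span_singleton p.rep_nonzero]
  have hsub : (↑(insert p A) : Set (Projectivization K V)) ⊆
      {q ∈ (P : Set (Projectivization K V)) | q.rep ∈ U.comap (K ∙ p.rep).mkQ} := by
    simp only [coe_insert, Set.insert_subset_iff]
    exact ⟨⟨hp, le_comap_mkQ _ U (mem_span_singleton_self _)⟩, fun a ha ↦ ⟨hA ha, mkQ_mem ha⟩⟩
  have hcard : #A + 1 < d * finrank K U + 2 := by
    rw [← card_insert_of_notMem hpA, ← Set.ncard_coe_finset]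
    exact (Set.ncard_le_ncard hsub (P.finite_toSet.sep _)).trans_lt (hP _ hU _ hW)
  exact Nat.le_of_lt_succ (Nat.lt_of_succ_lt_succ hcard)

theorem stmt_0_general {K σ : Type*} [Field K] [Finite σ] {d : ℕ}
    {P : Finset (Projectivization K (σ → K))}
    (hP : ∀ k : ℕ, 1 ≤ k → ∀ W : Submodule K (σ → K), finrank K W = k + 1 →
      {q ∈ (P : Set (Projectivization K (σ → K))) | q.rep ∈ W}.ncard < d * k + 2)
    {p : Projectivization K (σ → K)} (hp : p ∈ P) :
    ∃ f : MvPolynomial σ K, f.IsHomogeneous d ∧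
      (∀ q ∈ P, q ≠ p → eval q.rep f = 0) ∧ eval p.rep f ≠ 0 := by
  classical
  let v : {q // q ∈ P.erase p} → σ → K := fun q ↦ q.1.rep
  have hcard (A : Finset {q // q ∈ P.erase p}) :
      #A ≤ d * (((K ∙ p.rep).mkQ ∘ v) '' A).finrank K := by
    have hA : A.map (.subtype _) ⊆ P.erase p := fun _ ↦ property_of_mem_map_subtype A
    have hle := card_le_mul_finrank_mkQ_image hP hp (hA.trans (erase_subset p P))
      fun h ↦ notMem_erase p P (hA h)
    rwa [card_map, coe_map, ← Set.image_comp] at hle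
  obtain ⟨f, hf, hfv, hfp⟩ := exists_isHomogeneous_eval_eq_zero_of_card_le p.rep_nonzero hcard
  exact ⟨f, hf, fun q hq hqp ↦ hfv ⟨q, mem_erase.2 ⟨hqp, hq⟩⟩, hfp⟩

end Projective

/-- Eisenbud et al.: If for all `k ≥ 1` no `d*k + 2` points of a finite set `P`
in projective `r`-space over an algebraically closed field lie in a projective `k`-plane
(a linear subvariety of dimension `k`, i.e. the projectivization of a linear subspace of
dimension `k+1`), then for each point `p ∈ P` there is a homogeneous form of degree `d`
vanishing at all points of `P \ {p}` but not at `p`; in particular `P` imposes independent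
conditions on forms of degree `d`. -/
theorem stmt_0 {K : Type} [Field K] [IsAlgClosed K] (r d : ℕ) (hd : 2 ≤ d)
    (P : Finset (Projectivization K (Fin (r + 1) → K)))
    (hgen : ∀ k : ℕ, 1 ≤ k → ∀ W : Submodule K (Fin (r + 1) → K),
      Module.finrank K W = k + 1 →
      {q ∈ (P : Set (Projectivization K (Fin (r + 1) → K))) | q.rep ∈ W}.ncard < d * k + 2) :
    ∀ p ∈ P, ∃ f : MvPolynomial (Fin (r + 1)) K, f.IsHomogeneous d ∧
      (∀ q ∈ P, q ≠ p → eval q.rep f = 0) ∧ eval p.rep f ≠ 0 :=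
  fun _ hp ↦ stmt_0_general hgen hp
end

section
/- (Chasles/Cayley–Bacharach) If a set Γ₁ of 8 points in the projective plane lies in the complete intersection Γ of two plane cubic curves, then any cubic form vanishing on Γ₁ vanishes on all of Γ. -/
open MvPolynomial

/-!
Let `I_d(S)` be the space of forms of degree `d` vanishing on a finite set `S` of points of the
plane. If `m ≤ d + 2` points of `S` lie on a line and `S'` is the set of the other points, then
`dim I_{d+1}(S) ≤ dim I_d(S') + (d + 2 - m)`: a form of degree `d + 1` vanishing on `d + 2 - m`
further points of the line is divisible by the equation of the line.

Let `F` and `G` be cubics without common component and `S` a set of eight of their common points.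
No four points of `S` are collinear, since a line through four of them would be a common component.
By the inequality above, `dim I_2(T) ≤ 1` for any five points `T` of `S`, and `dim I_3(S) ≤ 2` if
three points of `S` are collinear. If no three are collinear and `dim I_3(S) ≥ 3`, then all of `S`
lies on a conic, which by a dimension count divides every cubic through `S`; again `F` and `G` have
a common component. So `dim I_3(S) = 2`, and every cubic through `S` is a combination of `F`
and `G`.
-/

open Module Finset
open scoped LinearAlgebra.Projectivization

namespace CayleyBacharach

section Forms

variable {R σ : Type*} [CommSemiring R]

lemma eval_smul_of_isHomogeneous {f : MvPolynomial σ R} {d : ℕ} (hf : f.IsHomogeneous d) (c : R)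
    (w : σ → R) : eval (c • w) f = c ^ d * eval w f := by
  simp only [eval_eq, Finset.mul_sum]
  refine Finset.sum_congr rfl fun m hm ↦ ?_
  have hmd : ∑ i ∈ m.support, m i = d := (hf.degree_eq_sum_deg_support hm).symm
  simp only [Pi.smul_apply, smul_eq_mul, mul_pow, prod_mul_distrib, prod_pow_eq_pow_sum, hmd]
  ring

lemma exists_dual_eval_eq {ℓ : MvPolynomial σ R} (hℓ : ℓ.IsHomogeneous 1) :
    ∃ φ : Dual R (σ → R), ∀ w, eval w ℓ = φ w := by
  rw [← mem_homogeneousSubmodule, homogeneousSubmodule_one_eq_span_X] at hℓ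
  induction hℓ using Submodule.span_induction with
  | mem _ h => obtain ⟨i, rfl⟩ := h; exact ⟨LinearMap.proj i, fun w ↦ eval_X i⟩
  | zero => exact ⟨0, fun w ↦ map_zero _⟩
  | add _ _ _ _ hf hg =>
    obtain ⟨⟨φ, hφ⟩, ψ, hψ⟩ := hf, hg
    exact ⟨φ + ψ, fun w ↦ by simp [hφ, hψ]⟩
  | smul c _ _ hf =>
    obtain ⟨φ, hφ⟩ := hf
    exact ⟨c • φ, fun w ↦ by simp [smul_eval, hφ]⟩

/-- The restriction `f(u + t v)` of a polynomial `f` to the affine line through `u` with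
direction `v`, as a polynomial in the parameter `t`. -/
noncomputable def restrictLine (f : MvPolynomial σ R) (u v : σ → R) : Polynomial R :=
  aeval (fun i ↦ Polynomial.C (u i) + Polynomial.C (v i) * Polynomial.X) f

lemma eval_restrictLine (f : MvPolynomial σ R) (u v : σ → R) (t : R) :
    (restrictLine f u v).eval t = eval (u + t • v) f := by
  have hcomp : (Polynomial.aeval t).comp
      (aeval fun i ↦ Polynomial.C (u i) + Polynomial.C (v i) * Polynomial.X) =
        aeval (u + t • v) := by
    refine algHom_ext fun i ↦ ?_
    simp [mul_comm t]
  simpa [restrictLine, Polynomial.aeval_def, aeval_eq_eval] using DFunLike.congr_fun hcomp f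

lemma natDegree_restrictLine_le {f : MvPolynomial σ R} {d : ℕ} (hf : f.IsHomogeneous d)
    (u v : σ → R) : (restrictLine f u v).natDegree ≤ d := by
  have hcoord (i : σ) :
      (Polynomial.C (u i) + Polynomial.C (v i) * Polynomial.X).natDegree ≤ 1 := by
    compute_degree
  simpa using! aeval_natDegree_le f hf.totalDegree_le _ hcoord

end Forms

section Divisibility

variable {R σ : Type*} [CommRing R] [IsDomain R]

attribute [local instance] MvPolynomial.gradedAlgebra in
lemma isHomogeneous_of_mul_left {p q : MvPolynomial σ R} {d e : ℕ} (hp : p.IsHomogeneous d)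
    (hp0 : p ≠ 0) (hpq : (p * q).IsHomogeneous (d + e)) : q.IsHomogeneous e := by
  have hcomp : p * q = p * DirectSum.decompose (homogeneousSubmodule σ R) q e := by
    rw [← DirectSum.coe_decompose_mul_add_of_left_mem (homogeneousSubmodule σ R) hp,
      DirectSum.decompose_of_mem_same (homogeneousSubmodule σ R) hpq]
  rw [mul_left_cancel₀ hp0 hcomp]
  exact (DirectSum.decompose (homogeneousSubmodule σ R) q e).2

lemma exists_eval_ne_zero [Infinite R] {f : MvPolynomial σ R} (hf : f ≠ 0) :
    ∃ w, eval w f ≠ 0 := by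
  contrapose! hf
  exact MvPolynomial.funext fun w ↦ by rw [hf, map_zero]

variable {K : Type*} [Field K]

-- Project along a vector `e` with `ℓ(e) = 1`: `f` is congruent modulo `ℓ` to `f(x - ℓ(x) e)`.
lemma linear_dvd_of_forall_eval_eq_zero [Infinite K] {ℓ f : MvPolynomial σ K}
    (hℓ : ℓ.IsHomogeneous 1) (hℓ0 : ℓ ≠ 0) (h : ∀ w, eval w ℓ = 0 → eval w f = 0) : ℓ ∣ f := by
  obtain ⟨φ, hφ⟩ := exists_dual_eval_eq hℓ
  obtain ⟨e, he⟩ : ∃ e, φ e = 1 := by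
    obtain ⟨w, hw⟩ := exists_eval_ne_zero hℓ0
    rw [hφ] at hw
    exact ⟨(φ w)⁻¹ • w, by simp [hw]⟩
  let π : MvPolynomial σ K →ₐ[K] MvPolynomial σ K := aeval fun i ↦ X i - C (e i) * ℓ
  have hπf : π f = 0 := by
    refine MvPolynomial.funext fun x ↦ ?_
    have hcomp : (aeval x).comp π = aeval (x - φ x • e) := by
      refine algHom_ext fun i ↦ ?_
      simp [π, aeval_eq_eval, hφ, mul_comm]
    have hx : eval x (π f) = eval (x - φ x • e) f := by
      simpa only [AlgHom.comp_apply, aeval_eq_eval] using! DFunLike.congr_fun hcomp f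
    rw [hx, map_zero, h]
    simp [hφ, he]
  have hmod : (Ideal.Quotient.mkₐ K (Ideal.span {ℓ})).comp π = Ideal.Quotient.mkₐ K _ := by
    refine algHom_ext fun i ↦ ?_
    rw [AlgHom.comp_apply, aeval_X, Ideal.Quotient.mkₐ_eq_mk, Ideal.Quotient.eq,
      sub_sub_cancel_left, neg_mem_iff]
    exact Ideal.mul_mem_left _ _ (Ideal.mem_span_singleton_self ℓ)
  have hf := DFunLike.congr_fun hmod f
  rw [AlgHom.comp_apply, hπf, map_zero, Ideal.Quotient.mkₐ_eq_mk] at hf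
  exact Ideal.mem_span_singleton.mp (Ideal.Quotient.eq_zero_iff_mem.mp hf.symm)

end Divisibility

section Zeros

variable {K σ : Type*} [Field K]

lemma eval_rep_mk_eq_zero_iff {f : MvPolynomial σ K} {d : ℕ} (hf : f.IsHomogeneous d)
    {w : σ → K} (hw : w ≠ 0) :
    eval (Projectivization.mk K w hw).rep f = 0 ↔ eval w f = 0 := by
  obtain ⟨a, ha⟩ := Projectivization.exists_smul_eq_mk_rep K w hw
  rw [← ha, Units.smul_def, eval_smul_of_isHomogeneous hf, mul_eq_zero,
    or_iff_right (pow_ne_zero _ a.ne_zero)]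

lemma exists_direction_of_finrank_eq_two {V : Type*} [AddCommGroup V] [Module K V]
    {W : Submodule K V} (hW : finrank K W = 2) (ψ : Dual K V) {u : V} (hu : u ∈ W)
    (hψu : ψ u = 1) : ∃ v, ∀ x ∈ W, ψ x = 1 → ∃ t : K, x = u + t • v := by
  have : FiniteDimensional K W := finite_of_finrank_pos (by omega)
  let φ : Dual K W := ψ ∘ₗ W.subtype
  have hφ : φ ≠ 0 := fun h ↦ one_ne_zero (hψu.symm.trans (DFunLike.congr_fun h ⟨u, hu⟩))
  have hker := Dual.finrank_ker_add_one_of_ne_zero hφ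
  obtain ⟨v, -, hv⟩ := finrank_eq_one_iff'.mp (show finrank K φ.ker = 1 by omega)
  refine ⟨v, fun x hx hψx ↦ ?_⟩
  obtain ⟨t, ht⟩ := hv ⟨⟨x - u, sub_mem hx hu⟩, by simp [φ, hψx, hψu]⟩
  exact ⟨t, eq_add_of_sub_eq' (congrArg (fun y ↦ (y.1.1 : V)) ht).symm⟩

-- In coordinates on the projective line `ℙ W` in which neither `w` nor any point of `T` is at
-- infinity, the form becomes a polynomial in one variable of degree at most `d`.
lemma eval_eq_zero_of_lt_card [Infinite K] {W : Submodule K (σ → K)} (hW : finrank K W = 2)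
    {f : MvPolynomial σ K} {d : ℕ} (hf : f.IsHomogeneous d) {T : Finset (ℙ K (σ → K))}
    (hTW : ∀ p ∈ T, p.rep ∈ W) (hT : d < #T) (hfT : ∀ p ∈ T, eval p.rep f = 0)
    {w : σ → K} (hw : w ∈ W) (hw0 : w ≠ 0) : eval w f = 0 := by
  classical
  obtain ⟨ψ, hψ⟩ := exists_dual_forall_apply_ne_zero (K := K)
    (fun o : Option T ↦ o.elim w fun p ↦ p.1.rep)
    (by rintro (_ | p); exacts [hw0, p.1.rep_nonzero])
  have hψw : ψ w ≠ 0 := hψ none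
  have hψT (p) (hp : p ∈ T) : ψ p.rep ≠ 0 := hψ (some ⟨p, hp⟩)
  obtain ⟨v, hv⟩ := exists_direction_of_finrank_eq_two hW ψ (W.smul_mem (ψ w)⁻¹ hw)
    (by simp [hψw])
  have hline (p) (hp : p ∈ T) : ∃ t : K, (ψ p.rep)⁻¹ • p.rep = (ψ w)⁻¹ • w + t • v :=
    hv _ (W.smul_mem _ (hTW p hp)) (by simp [hψT p hp])
  choose! t ht using hline
  have hinj : Set.InjOn t T := by
    intro p hp q hq hpq
    have hrep : (ψ p.rep)⁻¹ • p.rep = (ψ q.rep)⁻¹ • q.rep := by rw [ht p hp, ht q hq, hpq]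
    rw [← p.mk_rep, ← q.mk_rep, Projectivization.mk_eq_mk_iff']
    exact ⟨ψ p.rep * (ψ q.rep)⁻¹, by rw [mul_smul, ← hrep, smul_inv_smul₀ (hψT p hp)]⟩
  have hzero : restrictLine f ((ψ w)⁻¹ • w) v = 0 := by
    refine Polynomial.eq_zero_of_natDegree_lt_card_of_eval_eq_zero' _ (T.image t) ?_ ?_
    · rw [forall_mem_image]
      intro p hp
      rw [eval_restrictLine, ← ht p hp, eval_smul_of_isHomogeneous hf, hfT p hp, mul_zero]
    · rw [card_image_of_injOn hinj]
      exact (natDegree_restrictLine_le hf _ _).trans_lt hT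
  have heval := eval_restrictLine f ((ψ w)⁻¹ • w) v 0
  rw [hzero, zero_smul, add_zero, eval_smul_of_isHomogeneous hf, Polynomial.eval_zero] at heval
  exact (mul_eq_zero.mp heval.symm).resolve_left (pow_ne_zero _ (inv_ne_zero hψw))

-- If there were finitely many zeros, some hyperplane would avoid them all.
lemma infinite_zeros_of_forall_hyperplane [Infinite K] {f : MvPolynomial σ K} {d : ℕ}
    (hf : f.IsHomogeneous d)
    (h : ∀ ψ : Dual K (σ → K), ∃ w, w ≠ 0 ∧ ψ w = 0 ∧ eval w f = 0) :
    {p : ℙ K (σ → K) | eval p.rep f = 0}.Infinite := by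
  intro hfin
  have := hfin.to_subtype
  obtain ⟨ψ, hψ⟩ := exists_dual_forall_apply_ne_zero (K := K)
    (fun p : {p : ℙ K (σ → K) | eval p.rep f = 0} ↦ p.1.rep) fun p ↦ p.1.rep_nonzero
  obtain ⟨w, hw0, hψw, hfw⟩ := h ψ
  obtain ⟨a, ha⟩ := Projectivization.exists_smul_eq_mk_rep K w hw0
  refine hψ ⟨Projectivization.mk K w hw0, (eval_rep_mk_eq_zero_iff hf hw0).mpr hfw⟩ ?_
  rw [← ha, Units.smul_def, map_smul, hψw, smul_zero]

lemma infinite_zeros_of_linear [Infinite K] [Fintype σ] (hσ : 2 < Fintype.card σ)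
    {ℓ : MvPolynomial σ K} (hℓ : ℓ.IsHomogeneous 1) :
    {p : ℙ K (σ → K) | eval p.rep ℓ = 0}.Infinite := by
  obtain ⟨φ, hφ⟩ := exists_dual_eval_eq hℓ
  refine infinite_zeros_of_forall_hyperplane hℓ fun ψ ↦ ?_
  have hker : (ψ.prod φ).ker ≠ ⊥ := LinearMap.ker_ne_bot_of_finrank_lt (by simpa using hσ)
  obtain ⟨w, hw, hw0⟩ := Submodule.exists_mem_ne_zero_of_ne_bot hker
  have hw' : ψ w = 0 ∧ φ w = 0 := by simpa using hw
  exact ⟨w, hw0, hw'.1, (hφ w).trans hw'.2⟩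

-- If `f(u + t v)` has no zero it is a nonzero constant `c`; then `f(s u + v) = c s ^ d` vanishes
-- at `s = 0`.
lemma exists_zero_of_linearIndependent [IsAlgClosed K] {f : MvPolynomial σ K} {d : ℕ}
    (hf : f.IsHomogeneous d) (hd : d ≠ 0) {u v : σ → K} (huv : LinearIndependent K ![u, v]) :
    ∃ a b : K, a • u + b • v ≠ 0 ∧ eval (a • u + b • v) f = 0 := by
  by_contra! hne
  have hne' (a b : K) (hab : ¬(a = 0 ∧ b = 0)) : eval (a • u + b • v) f ≠ 0 :=
    hne a b fun h ↦ hab (LinearIndependent.pair_iff.mp huv a b h)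
  obtain ⟨c, hc⟩ : ∃ c, restrictLine f u v = Polynomial.C c := by
    refine ⟨_, Polynomial.eq_C_of_degree_eq_zero ?_⟩
    by_contra hdeg
    obtain ⟨t, ht⟩ := IsAlgClosed.exists_root _ hdeg
    rw [Polynomial.IsRoot, eval_restrictLine] at ht
    exact hne' 1 t (by simp) (by rwa [one_smul])
  have hrev : restrictLine f v u = Polynomial.C c * Polynomial.X ^ d := by
    refine Polynomial.eq_of_infinite_eval_eq _ _ <|
      (Set.finite_singleton (0 : K)).infinite_compl.mono fun s (hs : s ≠ 0) ↦ ?_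
    have hsuv : v + s • u = s • (u + s⁻¹ • v) := by
      rw [smul_add, smul_inv_smul₀ hs, add_comm]
    rw [Set.mem_ofPred_eq, eval_restrictLine, hsuv, eval_smul_of_isHomogeneous hf,
      ← eval_restrictLine, hc]
    simp [mul_comm c]
  refine hne' 0 1 (by simp) ?_
  have heval := eval_restrictLine f v u 0
  rw [hrev] at heval
  simpa [hd] using heval.symm

lemma infinite_zeros_of_isAlgClosed [IsAlgClosed K] [Fintype σ] (hσ : 2 < Fintype.card σ)
    {f : MvPolynomial σ K} {d : ℕ} (hf : f.IsHomogeneous d) (hd : d ≠ 0) :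
    {p : ℙ K (σ → K) | eval p.rep f = 0}.Infinite := by
  have := IsAlgClosed.instInfinite (K := K)
  refine infinite_zeros_of_forall_hyperplane hf fun ψ ↦ ?_
  have hker : 2 ≤ finrank K ψ.ker := by
    have hsum := ψ.finrank_range_add_finrank_ker
    have hrange := ψ.range.finrank_le
    rw [finrank_self] at hrange
    rw [finrank_fintype_fun_eq_card] at hsum
    omega
  obtain ⟨x, hx⟩ := exists_linearIndependent_of_le_finrank hker
  have huv : LinearIndependent K ![(x 0 : σ → K), (x 1 : σ → K)] := by
    convert! hx.map' ψ.ker.subtype ψ.ker.ker_subtype using 1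
    ext i : 1
    fin_cases i <;> rfl
  obtain ⟨a, b, hw0, hw⟩ := exists_zero_of_linearIndependent hf hd huv
  exact ⟨_, hw0, (ψ.ker.add_mem (ψ.ker.smul_mem a (x 0).2) (ψ.ker.smul_mem b (x 1).2)), hw⟩

end Zeros

section VanishingForms

variable {K σ : Type*} [Field K]

/-- The forms of degree `d` vanishing at every point of `S`, that is, the degree `d` part of the
homogeneous ideal of `S`. -/
noncomputable def vanishingForms (d : ℕ) (S : Finset (ℙ K (σ → K))) :
    Submodule K (MvPolynomial σ K) where
  carrier := {f | f.IsHomogeneous d ∧ ∀ p ∈ S, eval p.rep f = 0}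
  add_mem' hf hg := ⟨hf.1.add hg.1, fun p hp ↦ by rw [map_add, hf.2 p hp, hg.2 p hp, add_zero]⟩
  zero_mem' := ⟨isHomogeneous_zero σ K d, fun _ _ ↦ map_zero _⟩
  smul_mem' c f hf := ⟨(homogeneousSubmodule σ K d).smul_mem c hf.1,
    fun p hp ↦ by rw [smul_eval, hf.2 p hp, mul_zero]⟩

lemma mem_vanishingForms {d : ℕ} {S : Finset (ℙ K (σ → K))} {f : MvPolynomial σ K} :
    f ∈ vanishingForms d S ↔ f.IsHomogeneous d ∧ ∀ p ∈ S, eval p.rep f = 0 :=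
  Iff.rfl

lemma vanishingForms_anti {d : ℕ} {S T : Finset (ℙ K (σ → K))} (h : S ⊆ T) :
    vanishingForms d T ≤ vanishingForms d S :=
  fun _ hf ↦ ⟨hf.1, fun p hp ↦ hf.2 p (h hp)⟩

instance [Finite σ] (d : ℕ) (S : Finset (ℙ K (σ → K))) :
    FiniteDimensional K (vanishingForms d S) :=
  have : FiniteDimensional K (homogeneousSubmodule σ K d) :=
    Module.Finite.iff_fg.mpr (homogeneousSubmodule_fg σ K d)
  Submodule.finiteDimensional_of_le (S₂ := homogeneousSubmodule σ K d) fun _ hf ↦ hf.1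

lemma finrank_vanishingForms_anti [Finite σ] {d : ℕ} {S T : Finset (ℙ K (σ → K))} (h : S ⊆ T) :
    finrank K (vanishingForms d T) ≤ finrank K (vanishingForms d S) :=
  Submodule.finrank_mono (vanishingForms_anti h)

open scoped Classical in
lemma finrank_vanishingForms_le_insert_add_one [Finite σ] (d : ℕ) (S : Finset (ℙ K (σ → K)))
    (p : ℙ K (σ → K)) :
    finrank K (vanishingForms d S) ≤ finrank K (vanishingForms d (insert p S)) + 1 := by
  let φ : vanishingForms d S →ₗ[K] K := (aeval p.rep).toLinearMap ∘ₗ (vanishingForms d S).subtype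
  have hker : φ.ker.map (vanishingForms d S).subtype ≤ vanishingForms d (insert p S) := by
    rintro _ ⟨⟨f, hf⟩, hfφ, rfl⟩
    exact ⟨hf.1, forall_mem_insert _ _ _ |>.mpr ⟨hfφ, hf.2⟩⟩
  have hkerle := Submodule.finrank_mono hker
  rw [Submodule.finrank_map_subtype_eq] at hkerle
  have hrange := φ.range.finrank_le
  rw [finrank_self] at hrange
  have hsum := φ.finrank_range_add_finrank_ker
  omega

open scoped Classical in
lemma finrank_vanishingForms_le_union_add_card [Finite σ] (d : ℕ) (S T : Finset (ℙ K (σ → K))) :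
    finrank K (vanishingForms d S) ≤ finrank K (vanishingForms d (S ∪ T)) + #T := by
  induction T using Finset.induction_on with
  | empty => rw [union_empty, card_empty, add_zero]
  | insert p T hp ih =>
    have hstep := finrank_vanishingForms_le_insert_add_one d (S ∪ T) p
    rw [union_insert, card_insert_of_notMem hp]
    omega

lemma finrank_vanishingForms_zero_le_one (S : Finset (ℙ K (σ → K))) :
    finrank K (vanishingForms 0 S) ≤ 1 := by
  have hle : vanishingForms 0 S ≤ Submodule.span K {1} := by
    rw [← Submodule.one_eq_span, ← homogeneousSubmodule_zero (σ := σ)]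
    exact fun _ hf ↦ hf.1
  exact (Submodule.finrank_mono hle).trans (finrank_span_singleton one_ne_zero).le

lemma finrank_vanishingForms_one_empty [Fintype σ] :
    finrank K (vanishingForms 1 (∅ : Finset (ℙ K (σ → K)))) = Fintype.card σ := by
  have hspan : vanishingForms 1 (∅ : Finset (ℙ K (σ → K))) =
      Submodule.span K (Set.range (X : σ → MvPolynomial σ K)) := by
    rw [← homogeneousSubmodule_one_eq_span_X]
    ext f
    simp [mem_vanishingForms]
  rw [hspan]
  exact finrank_span_eq_card (linearIndependent_X σ K)

end VanishingForms

section Residuation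

variable {K : Type*} [Field K]

lemma exists_line_through (p q : ℙ K (Fin 3 → K)) :
    ∃ ℓ : MvPolynomial (Fin 3) K,
      ℓ.IsHomogeneous 1 ∧ ℓ ≠ 0 ∧ eval p.rep ℓ = 0 ∧ eval q.rep ℓ = 0 := by
  classical
  have hdim : vanishingForms 1 {p, q} ≠ ⊥ := by
    intro hbot
    have hle := finrank_vanishingForms_le_union_add_card 1 ∅ {p, q}
    rw [empty_union, hbot, finrank_bot, finrank_vanishingForms_one_empty, Fintype.card_fin] at hle
    have := card_le_two (a := p) (b := q)
    omega
  obtain ⟨ℓ, hℓ, hℓ0⟩ := Submodule.exists_mem_ne_zero_of_ne_bot hdim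
  exact ⟨ℓ, hℓ.1, hℓ0, hℓ.2 p (by simp), hℓ.2 q (by simp)⟩

variable [Infinite K]

lemma linear_dvd_of_lt_card {ℓ f : MvPolynomial (Fin 3) K} (hℓ : ℓ.IsHomogeneous 1)
    (hℓ0 : ℓ ≠ 0) {d : ℕ} (hf : f.IsHomogeneous d) {T : Finset (ℙ K (Fin 3 → K))}
    (hℓT : ∀ p ∈ T, eval p.rep ℓ = 0) (hfT : ∀ p ∈ T, eval p.rep f = 0) (hT : d < #T) :
    ℓ ∣ f := by
  obtain ⟨φ, hφ⟩ := exists_dual_eval_eq hℓ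
  have hφ0 : φ ≠ 0 := by
    obtain ⟨w, hw⟩ := exists_eval_ne_zero hℓ0
    rintro rfl
    exact hw (hφ w)
  have hker : finrank K φ.ker = 2 := by
    have hsum := Dual.finrank_ker_add_one_of_ne_zero hφ0
    rw [finrank_fintype_fun_eq_card, Fintype.card_fin] at hsum
    omega
  refine linear_dvd_of_forall_eval_eq_zero hℓ hℓ0 fun w hw ↦ ?_
  obtain rfl | hw0 := eq_or_ne w 0
  · obtain ⟨p, hp⟩ := card_pos.mp (d.zero_le.trans_lt hT)
    simpa [hfT p hp] using eval_smul_of_isHomogeneous hf 0 p.rep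
  · exact eval_eq_zero_of_lt_card hker hf (fun p hp ↦ (hφ _).symm.trans (hℓT p hp)) hT hfT
      ((hφ w).symm.trans hw) hw0

open scoped Classical in
lemma finrank_vanishingForms_succ_le_of_line {ℓ : MvPolynomial (Fin 3) K} (hℓ : ℓ.IsHomogeneous 1)
    (hℓ0 : ℓ ≠ 0) (d : ℕ) (S : Finset (ℙ K (Fin 3 → K))) :
    finrank K (vanishingForms (d + 1) S) ≤
      finrank K (vanishingForms d {p ∈ S | eval p.rep ℓ ≠ 0}) +
        (d + 2 - #{p ∈ S | eval p.rep ℓ = 0}) := by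
  obtain ⟨T, hTℓ, hT⟩ := ((infinite_zeros_of_linear (by simp) hℓ).sdiff
    S.finite_toSet).exists_subset_card_eq (d + 2 - #{p ∈ S | eval p.rep ℓ = 0})
  have hres : vanishingForms (d + 1) (S ∪ T) ≤
      (vanishingForms d {p ∈ S | eval p.rep ℓ ≠ 0}).map (LinearMap.mulLeft K ℓ) := by
    rintro f ⟨hf, hfST⟩
    have hdisj : Disjoint {p ∈ S | eval p.rep ℓ = 0} T :=
      disjoint_left.mpr fun p hp hpT ↦ (hTℓ hpT).2 (filter_subset _ _ hp)
    obtain ⟨q, rfl⟩ : ℓ ∣ f := by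
      refine linear_dvd_of_lt_card hℓ hℓ0 hf (T := {p ∈ S | eval p.rep ℓ = 0} ∪ T) ?_ ?_ ?_
      · exact fun p hp ↦ (mem_union.mp hp).elim (fun h ↦ (mem_filter.mp h).2) fun h ↦ (hTℓ h).1
      · exact fun p hp ↦ hfST p (union_subset_union_left (filter_subset _ _) hp)
      · rw [card_union_of_disjoint hdisj]
        omega
    refine ⟨q, ⟨isHomogeneous_of_mul_left hℓ hℓ0 (by rwa [add_comm]), fun p hp ↦ ?_⟩, rfl⟩
    obtain ⟨hpS, hpℓ⟩ := mem_filter.mp hp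
    have hprod := hfST p (mem_union_left T hpS)
    rw [map_mul] at hprod
    exact (mul_eq_zero.mp hprod).resolve_left hpℓ
  calc finrank K (vanishingForms (d + 1) S)
      ≤ finrank K (vanishingForms (d + 1) (S ∪ T)) + #T :=
        finrank_vanishingForms_le_union_add_card _ _ _
    _ ≤ _ := by
        rw [hT]
        exact Nat.add_le_add_right
          ((Submodule.finrank_mono hres).trans (Submodule.finrank_map_le _ _)) _

end Residuation

section CommonComponents

variable {K σ : Type*} [Field K] {F G : MvPolynomial σ K}

/-- The hypersurfaces `F = 0` and `G = 0` share no component: every form dividing both `F` and `G`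
has degree `0`. As every form divides `0`, this forces `F` and `G` to be nonzero unless they are
constant. -/
def NoCommonComponent (F G : MvPolynomial σ K) : Prop :=
  ∀ ⦃d : ℕ⦄ ⦃D : MvPolynomial σ K⦄, D.IsHomogeneous d → D ∣ F → D ∣ G → d = 0

lemma NoCommonComponent.linearIndependent (hFG : NoCommonComponent F G) {d : ℕ} (hd : d ≠ 0)
    (hF : F.IsHomogeneous d) (hG : G.IsHomogeneous d) : LinearIndependent K ![F, G] := by
  have hF0 : F ≠ 0 := by
    rintro rfl
    exact hd (hFG hG (dvd_zero G) dvd_rfl)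
  refine (LinearIndependent.pair_iff' hF0).mpr ?_
  rintro a rfl
  exact hd (hFG hF dvd_rfl ⟨C a, by rw [smul_eq_C_mul, mul_comm]⟩)

lemma NoCommonComponent.of_finite [IsAlgClosed K] [Fintype σ] (hσ : 2 < Fintype.card σ)
    (hfin : {p : ℙ K (σ → K) | eval p.rep F = 0 ∧ eval p.rep G = 0}.Finite) :
    NoCommonComponent F G := by
  rintro d D hD ⟨A, rfl⟩ ⟨B, rfl⟩
  by_contra hd
  refine infinite_zeros_of_isAlgClosed hσ hD hd (hfin.subset fun p (hp : _ = _) ↦ ?_)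
  simp [hp]

end CommonComponents

section PointsOnLines

variable {K : Type*} [Field K] {k l : ℕ} {S T : Finset (ℙ K (Fin 3 → K))}

open scoped Classical in
/-- Every line of the projective plane contains at most `k` points of `S`. -/
def AtMostOnLine (k : ℕ) (S : Finset (ℙ K (Fin 3 → K))) : Prop :=
  ∀ ℓ : MvPolynomial (Fin 3) K, ℓ.IsHomogeneous 1 → ℓ ≠ 0 → #{p ∈ S | eval p.rep ℓ = 0} ≤ k

lemma AtMostOnLine.mono (h : AtMostOnLine k T) (hkl : k ≤ l) (hST : S ⊆ T) : AtMostOnLine l S := by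
  classical
  exact fun ℓ hℓ hℓ0 ↦ (card_le_card (filter_subset_filter _ hST)).trans ((h ℓ hℓ hℓ0).trans hkl)

open scoped Classical in
lemma AtMostOnLine.exists_card_eq (h : AtMostOnLine (k + 1) S) (hk : ¬AtMostOnLine k S) :
    ∃ ℓ : MvPolynomial (Fin 3) K,
      ℓ.IsHomogeneous 1 ∧ ℓ ≠ 0 ∧ #{p ∈ S | eval p.rep ℓ = 0} = k + 1 := by
  simp only [AtMostOnLine, not_forall, not_le] at hk
  obtain ⟨ℓ, hℓ, hℓ0, hlt⟩ := hk
  exact ⟨ℓ, hℓ, hℓ0, (h ℓ hℓ hℓ0).antisymm hlt⟩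

lemma AtMostOnLine.vanishingForms_one_eq_bot (h : AtMostOnLine k S) (hS : k < #S) :
    vanishingForms 1 S = ⊥ := by
  classical
  refine (Submodule.eq_bot_iff _).mpr fun ℓ hℓ ↦ by_contra fun hℓ0 ↦ hS.not_ge ?_
  simpa only [filter_true_of_mem hℓ.2] using h ℓ hℓ.1 hℓ0

variable [Infinite K]

open scoped Classical in
lemma AtMostOnLine.finrank_vanishingForms_succ_le (h : AtMostOnLine 2 S) {p q : ℙ K (Fin 3 → K)}
    (hp : p ∈ S) (hq : q ∈ S) (hpq : p ≠ q) (d : ℕ) :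
    finrank K (vanishingForms (d + 1) S) ≤ finrank K (vanishingForms d (S \ {p, q})) + d := by
  obtain ⟨ℓ, hℓ, hℓ0, hℓp, hℓq⟩ := exists_line_through p q
  have hon : {p, q} = ({r ∈ S | eval r.rep ℓ = 0} : Finset _) := by
    refine eq_of_subset_of_card_le ?_ ((h ℓ hℓ hℓ0).trans (card_pair hpq).ge)
    simp [insert_subset_iff, hp, hq, hℓp, hℓq]
  have hres := finrank_vanishingForms_succ_le_of_line hℓ hℓ0 d S
  rwa [filter_not, ← hon, card_pair hpq, Nat.add_sub_cancel] at hres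

lemma finrank_lines_le_one (hS : 2 ≤ #S) : finrank K (vanishingForms 1 S) ≤ 1 := by
  classical
  obtain ⟨T, hTS, hT⟩ := exists_subset_card_eq hS
  obtain ⟨p, q, -, rfl⟩ := card_eq_two.mp hT
  obtain ⟨ℓ, hℓ, hℓ0, hℓp, hℓq⟩ := exists_line_through p q
  have hon : ({r ∈ {p, q} | eval r.rep ℓ = 0} : Finset _) = {p, q} :=
    filter_true_of_mem (by simp [hℓp, hℓq])
  calc finrank K (vanishingForms 1 S)
      ≤ finrank K (vanishingForms 1 {p, q}) := finrank_vanishingForms_anti hTS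
    _ ≤ finrank K (vanishingForms 0 {r ∈ {p, q} | eval r.rep ℓ ≠ 0}) + (2 - 2) := by
        simpa only [hon, hT] using finrank_vanishingForms_succ_le_of_line hℓ hℓ0 0 {p, q}
    _ ≤ 1 := finrank_vanishingForms_zero_le_one _

lemma finrank_conics_le_one (hS : 5 ≤ #S) (h : AtMostOnLine 3 S) :
    finrank K (vanishingForms 2 S) ≤ 1 := by
  classical
  by_cases h2 : AtMostOnLine 2 S
  · obtain ⟨p, hp, q, hq, hpq⟩ := one_lt_card.mp (show 1 < #S by omega)
    have hoff : 2 < #(S \ {p, q}) := by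
      rw [card_sdiff_of_subset (by simp [insert_subset_iff, hp, hq]), card_pair hpq]
      omega
    have hlines := (h2.mono le_rfl sdiff_subset).vanishingForms_one_eq_bot hoff
    calc finrank K (vanishingForms 2 S)
        ≤ finrank K (vanishingForms 1 (S \ {p, q})) + 1 :=
          h2.finrank_vanishingForms_succ_le hp hq hpq 1
      _ = 1 := by rw [hlines, finrank_bot]
  · obtain ⟨ℓ, hℓ, hℓ0, hon⟩ := h.exists_card_eq h2
    have hsplit : #{p ∈ S | eval p.rep ℓ = 0} + #{p ∈ S | eval p.rep ℓ ≠ 0} = #S :=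
      card_filter_add_card_filter_not _
    calc finrank K (vanishingForms 2 S)
        ≤ finrank K (vanishingForms 1 {p ∈ S | eval p.rep ℓ ≠ 0}) + (3 - 3) := by
          simpa only [hon] using finrank_vanishingForms_succ_le_of_line hℓ hℓ0 1 S
      _ ≤ 1 := finrank_lines_le_one (by omega)

end PointsOnLines

section EightPoints

variable {K : Type*} [Field K] [Infinite K] {S : Finset (ℙ K (Fin 3 → K))}

-- For `x, y, z ∈ S`, the conics through `S \ {x, y}`, through `S \ {x, z}` and through `S \ {y, z}`
-- all coincide with the unique conic through `S \ {x, y, z}`.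
lemma exists_conic_of_three_le_finrank_cubics (hS : 8 ≤ #S) (h : AtMostOnLine 2 S)
    (hcubics : 3 ≤ finrank K (vanishingForms 3 S)) : ∃ q ∈ vanishingForms 2 S, q ≠ 0 := by
  classical
  obtain ⟨x, hx, y, hy, z, hz, hxy, hxz, hyz⟩ := two_lt_card.mp (show 2 < #S by omega)
  have hcard : 5 ≤ #(S \ {x, y, z}) := by
    rw [card_sdiff_of_subset (by simp [insert_subset_iff, hx, hy, hz]),
      card_eq_three.mpr ⟨x, y, z, hxy, hxz, hyz, rfl⟩]
    omega
  have hunique : finrank K (vanishingForms 2 (S \ {x, y, z})) ≤ 1 :=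
    finrank_conics_le_one hcard (h.mono (by omega) sdiff_subset)
  have hsix {a b} (ha : a ∈ S) (hb : b ∈ S) (hab : a ≠ b) :
      1 ≤ finrank K (vanishingForms 2 (S \ {a, b})) := by
    have : finrank K (vanishingForms 3 S) ≤ _ := h.finrank_vanishingForms_succ_le ha hb hab 2
    omega
  have hcoincide {a b} (ha : a ∈ S) (hb : b ∈ S) (hab : a ≠ b)
      (habT : {a, b} ⊆ ({x, y, z} : Finset _)) :
      vanishingForms 2 (S \ {a, b}) = vanishingForms 2 (S \ {x, y, z}) :=
    Submodule.eq_of_le_of_finrank_le (vanishingForms_anti (sdiff_subset_sdiff le_rfl habT))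
      (hunique.trans (hsix ha hb hab))
  obtain ⟨q, hq, hq0⟩ := Submodule.exists_mem_ne_zero_of_ne_bot
    (Submodule.one_le_finrank_iff.mp (hsix hx hy hxy))
  have hqxz := hq
  rw [hcoincide hx hy hxy (by grind), ← hcoincide hx hz hxz (by grind)] at hqxz
  have hqyz := hq
  rw [hcoincide hx hy hxy (by grind), ← hcoincide hy hz hyz (by grind)] at hqyz
  refine ⟨q, ⟨hq.1, fun p hp ↦ ?_⟩, hq0⟩
  have hcover : p ∈ S \ {x, y} ∨ p ∈ S \ {x, z} ∨ p ∈ S \ {y, z} := by grind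
  exact hcover.elim (hq.2 p) fun h ↦ h.elim (hqxz.2 p) (hqyz.2 p)

-- By dimension, every cubic through `S` is the product of the conic and a linear form.
lemma dvd_cubic_of_conic (hS : 8 ≤ #S) (h : AtMostOnLine 2 S) {q f : MvPolynomial (Fin 3) K}
    (hq : q ∈ vanishingForms 2 S) (hq0 : q ≠ 0) (hf : f ∈ vanishingForms 3 S) : q ∣ f := by
  classical
  let L := vanishingForms (K := K) (σ := Fin 3) 1 ∅
  have hle : L.map (LinearMap.mulLeft K q) ≤ vanishingForms 3 S := by
    rintro _ ⟨ℓ, hℓ, rfl⟩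
    exact ⟨hq.1.mul hℓ.1, fun p hp ↦ by simp [hq.2 p hp]⟩
  have hmul : finrank K (L.map (LinearMap.mulLeft K q)) = 3 :=
    (L.equivMapOfInjective _ (mul_right_injective₀ hq0)).finrank_eq.symm.trans
      (finrank_vanishingForms_one_empty.trans (Fintype.card_fin 3))
  have hcubics : finrank K (vanishingForms 3 S) ≤ 3 := by
    obtain ⟨x, hx, y, hy, hxy⟩ := one_lt_card.mp (show 1 < #S by omega)
    have hcard : 5 ≤ #(S \ {x, y}) := by
      rw [card_sdiff_of_subset (by simp [insert_subset_iff, hx, hy]), card_pair hxy]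
      omega
    calc finrank K (vanishingForms 3 S)
        ≤ finrank K (vanishingForms 2 (S \ {x, y})) + 2 :=
          h.finrank_vanishingForms_succ_le hx hy hxy 2
      _ ≤ 1 + 2 := Nat.add_le_add_right
          (finrank_conics_le_one hcard (h.mono (by omega) sdiff_subset)) 2
  have hf' : f ∈ L.map (LinearMap.mulLeft K q) := by
    rwa [Submodule.eq_of_le_of_finrank_le hle (hcubics.trans hmul.ge)]
  obtain ⟨ℓ, -, rfl⟩ := hf'
  exact dvd_mul_right q ℓ

variable {F G : MvPolynomial (Fin 3) K}

lemma NoCommonComponent.atMostOnLine (hFG : NoCommonComponent F G) {d : ℕ}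
    (hF : F ∈ vanishingForms d S) (hG : G ∈ vanishingForms d S) : AtMostOnLine d S := by
  classical
  intro ℓ hℓ hℓ0
  by_contra! hlt
  have hdvd {f : MvPolynomial (Fin 3) K} (hf : f ∈ vanishingForms d S) : ℓ ∣ f :=
    linear_dvd_of_lt_card hℓ hℓ0 hf.1 (fun p hp ↦ (mem_filter.mp hp).2)
      (fun p hp ↦ hf.2 p (mem_filter.mp hp).1) hlt
  exact one_ne_zero (hFG hℓ (hdvd hF) (hdvd hG))

lemma NoCommonComponent.finrank_cubics_le_two (hFG : NoCommonComponent F G) (hS : 8 ≤ #S)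
    (hF : F ∈ vanishingForms 3 S) (hG : G ∈ vanishingForms 3 S) :
    finrank K (vanishingForms 3 S) ≤ 2 := by
  classical
  have h3 : AtMostOnLine 3 S := hFG.atMostOnLine hF hG
  by_cases h2 : AtMostOnLine 2 S
  · by_contra! hcubics
    obtain ⟨q, hq, hq0⟩ := exists_conic_of_three_le_finrank_cubics hS h2 hcubics
    exact two_ne_zero
      (hFG hq.1 (dvd_cubic_of_conic hS h2 hq hq0 hF) (dvd_cubic_of_conic hS h2 hq hq0 hG))
  · obtain ⟨ℓ, hℓ, hℓ0, hon⟩ := h3.exists_card_eq h2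
    have hsplit : #{p ∈ S | eval p.rep ℓ = 0} + #{p ∈ S | eval p.rep ℓ ≠ 0} = #S :=
      card_filter_add_card_filter_not _
    calc finrank K (vanishingForms 3 S)
        ≤ finrank K (vanishingForms 2 {p ∈ S | eval p.rep ℓ ≠ 0}) + (4 - 3) := by
          simpa only [hon] using finrank_vanishingForms_succ_le_of_line hℓ hℓ0 2 S
      _ ≤ 1 + (4 - 3) := Nat.add_le_add_right
          (finrank_conics_le_one (by omega) (h3.mono le_rfl (filter_subset _ _))) _

end EightPoints

end CayleyBacharach

open CayleyBacharach in
theorem stmt_1_general {K : Type*} [Field K] [Infinite K] {F G h : MvPolynomial (Fin 3) K}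
    (hF : F.IsHomogeneous 3) (hG : G.IsHomogeneous 3)
    (hFG : NoCommonComponent F G) {Γ₁ : Set (ℙ K (Fin 3 → K))}
    (hsub : Γ₁ ⊆ {p | eval p.rep F = 0 ∧ eval p.rep G = 0}) (hcard : 8 ≤ Γ₁.ncard)
    (hh : h.IsHomogeneous 3) (hvan : ∀ p ∈ Γ₁, eval p.rep h = 0) :
    h ∈ Submodule.span K {F, G} := by
  lift Γ₁ to Finset (ℙ K (Fin 3 → K)) using Set.finite_of_ncard_ne_zero (by omega)
  rw [Set.ncard_coe_finset] at hcard
  have hFmem : F ∈ vanishingForms 3 Γ₁ := ⟨hF, fun p hp ↦ (hsub hp).1⟩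
  have hGmem : G ∈ vanishingForms 3 Γ₁ := ⟨hG, fun p hp ↦ (hsub hp).2⟩
  have hpencil : Submodule.span K {F, G} = vanishingForms 3 Γ₁ := by
    refine Submodule.eq_of_le_of_finrank_le (Submodule.span_le.mpr ?_) ?_
    · simp [Set.insert_subset_iff, hFmem, hGmem]
    · have hrank := finrank_span_eq_card (hFG.linearIndependent three_ne_zero hF hG)
      rw [Matrix.range_cons_cons_empty, Fintype.card_fin] at hrank
      exact (hFG.finrank_cubics_le_two hcard hFmem hGmem).trans hrank.ge
  exact hpencil ▸ ⟨hh, hvan⟩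

/-- Chasles / Cayley–Bacharach: if a set `Γ₁` of 8 points in `ℙ²` lies in the
complete intersection `Γ` of two plane cubic curves (the common zero locus of two cubic forms,
zero-dimensional of degree 9, here consisting of 9 reduced points), then any cubic form
vanishing on `Γ₁` vanishes on all of `Γ`. -/
theorem stmt_1 (F G : MvPolynomial (Fin 3) ℂ)
    (hF : F.IsHomogeneous 3) (hG : G.IsHomogeneous 3)
    (Γ : Set (Projectivization ℂ (Fin 3 → ℂ)))
    (hΓ : Γ = {p : Projectivization ℂ (Fin 3 → ℂ) | eval p.rep F = 0 ∧ eval p.rep G = 0})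
    (hdeg : Γ.ncard = 9)
    (Γ₁ : Set (Projectivization ℂ (Fin 3 → ℂ))) (hsub : Γ₁ ⊆ Γ) (hcard : Γ₁.ncard = 8)
    (h : MvPolynomial (Fin 3) ℂ) (hh : h.IsHomogeneous 3)
    (hvan : ∀ p ∈ Γ₁, eval p.rep h = 0) :
    ∀ p ∈ Γ, eval p.rep h = 0 := by
  subst hΓ
  have hFG : CayleyBacharach.NoCommonComponent F G :=
    .of_finite (by simp) (Set.finite_of_ncard_ne_zero (by omega))
  obtain ⟨a, b, rfl⟩ := Submodule.mem_span_pair.mp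
    (stmt_1_general hF hG hFG hsub hcard.ge hh hvan)
  rintro p ⟨hFp, hGp⟩
  simp [smul_eval, hFp, hGp]
end
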